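/- arXiv:2601.13395 — 6 statements merged into one kernel-verified Lean document; each statement's English description precedes it below -/
import Mathlib

section
/- Let x : ℂᵏ → ℂⁿ be real-differentiable at p₀ with Wirtinger decomposition (Jx, Jx') of fderiv ℝ x p₀, and let g : ℂⁿ × ℂᵏ → ℂᵐ be real-differentiable at (x p₀, p₀) with joint Wirtinger decomposition (fderiv ℝ g (x p₀, p₀))(u, w) = A·u + B·conj(u) + C·w + D·conj(w) for complex matrices A, B (size m×n) and C, D (size m×k). Suppose g(x p, p) = 0 for all p in a neighborhood of p₀. Then the matrix equations A·Jx + B·conj(Jx') + C = 0 and A·Jx' + B·conj(Jx) + D = 0 hold. -/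
/-!
By the chain rule, the derivative of `p ↦ g (x p, p)` is the sum of the derivative of `g` in its
first variable composed with the derivative of `x`, and the derivative of `g` in its second
variable. Conjugation swaps the two parts of a Wirtinger decomposition, which gives the
decomposition of the composite. A real-linear map vanishes only if both of its Wirtinger matrices
do, since its values at `v` and `i v` separate the `ℂ`-linear part from the antilinear one.
-/

open Matrix ComplexConjugate

section Wirtinger

variable {l m n : Type*} [Fintype n]

/-- The `ℝ`-linear map `v ↦ J v + J' conj(v)` whose Wirtinger decomposition is `(J, J')`.
Entrywise conjugation of a vector is written as `star`. -/
def wirtingerMap (J J' : Matrix m n ℂ) : (n → ℂ) →ₗ[ℝ] (m → ℂ) where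
  toFun v := J *ᵥ v + J' *ᵥ star v
  map_add' v w := by
    simp only [star_add, mulVec_add]
    abel
  map_smul' c v := by
    simp only [star_smul, star_trivial, mulVec_smul, smul_add, RingHom.id_apply]

theorem wirtingerMap_apply (J J' : Matrix m n ℂ) (v : n → ℂ) :
    wirtingerMap J J' v = J *ᵥ v + J' *ᵥ star v :=
  rfl

theorem wirtingerMap_add (P P' Q Q' : Matrix m n ℂ) :
    wirtingerMap (P + Q) (P' + Q') = wirtingerMap P P' + wirtingerMap Q Q' := by
  ext1 v
  simp only [wirtingerMap_apply, LinearMap.add_apply, add_mulVec]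
  abel

theorem star_mulVec_eq_map_conj_mulVec_star (M : Matrix m n ℂ) (v : n → ℂ) :
    star (M *ᵥ v) = M.map conj *ᵥ star v :=
  funext fun i => RingHom.map_mulVec conj M v i

theorem star_wirtingerMap_apply (J J' : Matrix m n ℂ) (v : n → ℂ) :
    star (wirtingerMap J J' v) = wirtingerMap (J'.map conj) (J.map conj) v := by
  simp only [wirtingerMap_apply, star_add, star_mulVec_eq_map_conj_mulVec_star, star_star, add_comm]

theorem wirtingerMap_comp [Fintype m] (A B : Matrix l m ℂ) (J J' : Matrix m n ℂ) :
    wirtingerMap A B ∘ₗ wirtingerMap J J' =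
      wirtingerMap (A * J + B * J'.map conj) (A * J' + B * J.map conj) := by
  ext1 v
  rw [LinearMap.comp_apply, wirtingerMap_apply A B, star_wirtingerMap_apply]
  simp only [wirtingerMap_apply, mulVec_add, mulVec_mulVec, add_mulVec]
  abel

theorem wirtingerMap_I_smul (J J' : Matrix m n ℂ) (v : n → ℂ) :
    wirtingerMap J J' (Complex.I • v) = Complex.I • (J *ᵥ v - J' *ᵥ star v) := by
  simp only [wirtingerMap_apply, star_smul, Complex.star_def, Complex.conj_I, mulVec_smul, neg_smul,
    mulVec_neg, sub_eq_add_neg, smul_add, smul_neg]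

theorem wirtingerMap_eq_zero_iff {J J' : Matrix m n ℂ} :
    wirtingerMap J J' = 0 ↔ J = 0 ∧ J' = 0 := by
  refine ⟨fun h => ?_, ?_⟩
  · have h_sum (v : n → ℂ) : J *ᵥ v + J' *ᵥ star v = 0 := LinearMap.congr_fun h v
    have h_diff (v : n → ℂ) : J *ᵥ v = J' *ᵥ star v := by
      have h_smul := wirtingerMap_I_smul J J' v
      rw [h, LinearMap.zero_apply, eq_comm, smul_eq_zero_iff_right Complex.I_ne_zero] at h_smul
      exact sub_eq_zero.mp h_smul
    have h_anti (v : n → ℂ) : J' *ᵥ star v = 0 := by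
      rw [← self_eq_neg, eq_neg_iff_add_eq_zero, ← h_sum v, h_diff v]
    refine ⟨ext_iff_mulVec.mpr fun v => ?_, ext_iff_mulVec.mpr fun v => ?_⟩
    · rw [h_diff, h_anti, zero_mulVec]
    · rw [← star_star v, h_anti, zero_mulVec]
  · rintro ⟨rfl, rfl⟩
    ext1 v
    simp only [wirtingerMap_apply, zero_mulVec, add_zero, LinearMap.zero_apply]

end Wirtinger

section Constraint

variable {ι κ μ : Type*} [Fintype ι] [Fintype κ] [Finite μ]
  {x : (κ → ℂ) → (ι → ℂ)} {p₀ : κ → ℂ} {Jx Jx' : Matrix ι κ ℂ}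
  {g : (ι → ℂ) × (κ → ℂ) → μ → ℂ} {A B : Matrix μ ι ℂ} {C D : Matrix μ κ ℂ}

theorem fderiv_comp_graph_eq_wirtingerMap (hx : DifferentiableAt ℝ x p₀)
    (hJx : ∀ v, fderiv ℝ x p₀ v = wirtingerMap Jx Jx' v)
    (hg : DifferentiableAt ℝ g (x p₀, p₀))
    (hABCD : ∀ u w, fderiv ℝ g (x p₀, p₀) (u, w) = wirtingerMap A B u + wirtingerMap C D w) :
    (fderiv ℝ (fun p => g (x p, p)) p₀ : (κ → ℂ) →ₗ[ℝ] (μ → ℂ)) =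
      wirtingerMap (A * Jx + B * Jx'.map conj + C) (A * Jx' + B * Jx.map conj + D) := by
  cases nonempty_fintype μ
  have h_chain : HasFDerivAt (fun p => g (x p, p))
      (fderiv ℝ g (x p₀, p₀) ∘L (fderiv ℝ x p₀).prod (.id ℝ (κ → ℂ))) p₀ :=
    hg.hasFDerivAt.comp (f := fun p => (x p, p)) p₀ (hx.hasFDerivAt.prodMk (hasFDerivAt_id p₀))
  rw [h_chain.fderiv, wirtingerMap_add, ← wirtingerMap_comp]
  ext1 v
  change fderiv ℝ g (x p₀, p₀) (fderiv ℝ x p₀ v, v) =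
    wirtingerMap A B (wirtingerMap Jx Jx' v) + wirtingerMap C D v
  rw [hABCD, hJx]

theorem generalized_adjoint_constraint_equations_general (hx : DifferentiableAt ℝ x p₀)
    (hJx : ∀ v, fderiv ℝ x p₀ v = wirtingerMap Jx Jx' v)
    (hg : DifferentiableAt ℝ g (x p₀, p₀))
    (hABCD : ∀ u w, fderiv ℝ g (x p₀, p₀) (u, w) = wirtingerMap A B u + wirtingerMap C D w) :
    fderiv ℝ (fun p => g (x p, p)) p₀ = 0 ↔
      A * Jx + B * Jx'.map conj + C = 0 ∧ A * Jx' + B * Jx.map conj + D = 0 := by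
  rw [← wirtingerMap_eq_zero_iff, ← fderiv_comp_graph_eq_wirtingerMap hx hJx hg hABCD,
    ← ContinuousLinearMap.toLinearMap_zero, ContinuousLinearMap.coe_inj]

end Constraint

/-- Generalized adjoint constraint equations: if `x : ℂᵏ → ℂⁿ` has Wirtinger decomposition
`(Jx, Jx')` at `p₀`, `g : ℂⁿ × ℂᵏ → ℂᵐ` has joint Wirtinger decomposition `(A, B, C, D)`
at `(x p₀, p₀)`, and `g (x p, p) = 0` near `p₀`, then
`A·Jx + B·conj(Jx') + C = 0` and `A·Jx' + B·conj(Jx) + D = 0`. -/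
theorem generalized_adjoint_constraint_equations (n m k : ℕ)
    (x : (Fin k → ℂ) → (Fin n → ℂ)) (p₀ : Fin k → ℂ)
    (hx : DifferentiableAt ℝ x p₀)
    (Jx Jx' : Matrix (Fin n) (Fin k) ℂ)
    (hJx : ∀ v : Fin k → ℂ,
      fderiv ℝ x p₀ v = Jx.mulVec v + Jx'.mulVec (fun j => starRingEnd ℂ (v j)))
    (g : (Fin n → ℂ) × (Fin k → ℂ) → Fin m → ℂ)
    (hg : DifferentiableAt ℝ g (x p₀, p₀))
    (A B : Matrix (Fin m) (Fin n) ℂ) (C D : Matrix (Fin m) (Fin k) ℂ)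
    (hABCD : ∀ (u : Fin n → ℂ) (w : Fin k → ℂ),
      fderiv ℝ g (x p₀, p₀) (u, w) =
        A.mulVec u + B.mulVec (fun j => starRingEnd ℂ (u j)) +
        C.mulVec w + D.mulVec (fun j => starRingEnd ℂ (w j)))
    (hconstr : ∀ᶠ p in nhds p₀, g (x p, p) = 0) :
    A * Jx + B * Jx'.map (starRingEnd ℂ) + C = 0 ∧
    A * Jx' + B * Jx.map (starRingEnd ℂ) + D = 0 :=
  (generalized_adjoint_constraint_equations_general hx hJx hg fun u w =>
    (hABCD u w).trans (add_assoc _ _ _)).mp <|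
      (Filter.EventuallyEq.fderiv_eq hconstr).trans (fderiv_const_apply 0)
end

section
/- Let x : ℂᵏ → ℂⁿ be real-differentiable at p₀ with Wirtinger decomposition (Jx, Jx') of fderiv ℝ x p₀, and let f : ℂⁿ × ℂᵏ → ℝ be real-differentiable at (x p₀, p₀) with (fderiv ℝ f (x p₀, p₀))(u, w) = 2·Re(Σⱼ aⱼ·uⱼ) + 2·Re(Σⱼ cⱼ·wⱼ) for some a ∈ ℂⁿ, c ∈ ℂᵏ. Then the map p ↦ f(x p, p) is real-differentiable at p₀ and for every w ∈ ℂᵏ its derivative satisfies (fderiv ℝ (fun p => f (x p, p)) p₀)(w) = Re⟪G, w⟫, where G := Jxᴴ·(2·conj a) + (Jx')ᵀ·(2·a) + 2·conj c ∈ ℂᵏ. That is, G is the gradient of the constrained cost with respect to p. -/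
/-!
Chain rule along the graph `p ↦ (x p, p)`, followed by a transposition: for the real pairing
`Re ⟪g, v⟫` the adjoint of `v ↦ J v` is `g ↦ Jᴴ g`, and, since conjugation does not change real
parts, the adjoint of the antilinear map `v ↦ J' (conj v)` is `g ↦ J'ᵀ (conj g)`.
-/

section RealPairing

open scoped Matrix

variable {𝕜 ι κ : Type*} [RCLike 𝕜] [Fintype ι] [Fintype κ]

/-- The real-linear functional `w ↦ Re ⟪G, w⟫`. A real-valued function with this derivative has
gradient `G`. It is defined on `ι → 𝕜` rather than `EuclideanSpace 𝕜 ι`; all norms being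
equivalent, this does not affect differentiability. -/
def reInnerCLM (G : ι → 𝕜) : (ι → 𝕜) →L[ℝ] ℝ where
  toFun w := RCLike.re (star G ⬝ᵥ w)
  map_add' v w := by rw [dotProduct_add, map_add]
  map_smul' r w := by rw [dotProduct_smul, RCLike.smul_re, RingHom.id_apply, smul_eq_mul]
  cont := by fun_prop

theorem reInnerCLM_apply (G w : ι → 𝕜) : reInnerCLM G w = RCLike.re (star G ⬝ᵥ w) := rfl

theorem reInnerCLM_add_left (G H w : ι → 𝕜) :
    reInnerCLM (G + H) w = reInnerCLM G w + reInnerCLM H w := by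
  simp only [reInnerCLM_apply, star_add, add_dotProduct, map_add]

theorem reInnerCLM_two_smul_star (a w : ι → 𝕜) :
    reInnerCLM ((2 : 𝕜) • star a) w = 2 * RCLike.re (a ⬝ᵥ w) := by
  rw [reInnerCLM_apply, star_smul, star_star, star_ofNat, smul_dotProduct, smul_eq_mul,
    RCLike.ofNat_mul_re]

theorem reInnerCLM_mulVec (J : Matrix ι κ 𝕜) (g : ι → 𝕜) (v : κ → 𝕜) :
    reInnerCLM g (J *ᵥ v) = reInnerCLM (Jᴴ *ᵥ g) v := by
  rw [reInnerCLM_apply, reInnerCLM_apply, Matrix.star_mulVec, Matrix.conjTranspose_conjTranspose,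
    Matrix.dotProduct_mulVec]

theorem reInnerCLM_mulVec_star (J : Matrix ι κ 𝕜) (g : ι → 𝕜) (v : κ → 𝕜) :
    reInnerCLM g (J *ᵥ star v) = reInnerCLM (Jᵀ *ᵥ star g) v := by
  have star_pairing : star g ⬝ᵥ J *ᵥ star v = star (star (Jᵀ *ᵥ star g) ⬝ᵥ v) := by
    rw [Matrix.dotProduct_mulVec, Matrix.mulVec_transpose, Matrix.star_dotProduct, star_star,
      dotProduct_comm]
  rw [reInnerCLM_apply, reInnerCLM_apply, star_pairing, RCLike.star_def, RCLike.conj_re]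

theorem constrained_cost_gradient_general
    {x : (κ → 𝕜) → (ι → 𝕜)} {x' : (κ → 𝕜) →L[ℝ] (ι → 𝕜)} {p₀ : κ → 𝕜}
    (hx : HasFDerivAt x x' p₀) {J J' : Matrix ι κ 𝕜}
    (hJ : ∀ v, x' v = J *ᵥ v + J' *ᵥ star v)
    {f : (ι → 𝕜) × (κ → 𝕜) → ℝ} {f' : (ι → 𝕜) × (κ → 𝕜) →L[ℝ] ℝ}
    (hf : HasFDerivAt f f' (x p₀, p₀)) {a : ι → 𝕜} {c : κ → 𝕜}
    (hf' : ∀ u w, f' (u, w) = 2 * RCLike.re (a ⬝ᵥ u) + 2 * RCLike.re (c ⬝ᵥ w)) :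
    HasFDerivAt (fun p => f (x p, p))
      (reInnerCLM (Jᴴ *ᵥ ((2 : 𝕜) • star a) + J'ᵀ *ᵥ ((2 : 𝕜) • a) + (2 : 𝕜) • star c)) p₀ := by
  have chain_rule : HasFDerivAt (fun p => f (x p, p)) (f' ∘L x'.prod (.id ℝ (κ → 𝕜))) p₀ :=
    HasFDerivAt.comp (f := fun p => (x p, p)) p₀ hf (hx.prodMk (hasFDerivAt_id p₀))
  have star_two_smul_star : star ((2 : 𝕜) • star a) = (2 : 𝕜) • a := by
    rw [star_smul, star_star, star_ofNat]
  refine chain_rule.congr_fderiv (ContinuousLinearMap.ext fun w => ?_)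
  calc f' (x' w, w)
      = reInnerCLM ((2 : 𝕜) • star a) (J *ᵥ w + J' *ᵥ star w)
          + reInnerCLM ((2 : 𝕜) • star c) w := by
        rw [hf', hJ, reInnerCLM_two_smul_star, reInnerCLM_two_smul_star]
    _ = reInnerCLM (Jᴴ *ᵥ ((2 : 𝕜) • star a)) w + reInnerCLM (J'ᵀ *ᵥ ((2 : 𝕜) • a)) w
          + reInnerCLM ((2 : 𝕜) • star c) w := by
        rw [map_add, reInnerCLM_mulVec, reInnerCLM_mulVec_star, star_two_smul_star]
    _ = reInnerCLM (Jᴴ *ᵥ ((2 : 𝕜) • star a) + J'ᵀ *ᵥ ((2 : 𝕜) • a) + (2 : 𝕜) • star c) w := by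
        rw [reInnerCLM_add_left, reInnerCLM_add_left]

end RealPairing

/-- Gradient of the constrained cost: if `x : ℂᵏ → ℂⁿ` has Wirtinger decomposition
`(Jx, Jx')` at `p₀` and `f : ℂⁿ × ℂᵏ → ℝ` has real derivative
`(u, w) ↦ 2 Re (∑ aⱼ uⱼ) + 2 Re (∑ cⱼ wⱼ)` at `(x p₀, p₀)`, then `p ↦ f (x p, p)` is
real-differentiable at `p₀` with derivative `w ↦ Re ⟪G, w⟫`, where
`G = Jxᴴ·(2 conj a) + Jx'ᵀ·(2 a) + 2 conj c`. -/
theorem constrained_cost_gradient (n k : ℕ)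
    (x : (Fin k → ℂ) → (Fin n → ℂ)) (p₀ : Fin k → ℂ)
    (hx : DifferentiableAt ℝ x p₀)
    (Jx Jx' : Matrix (Fin n) (Fin k) ℂ)
    (hJx : ∀ v : Fin k → ℂ,
      fderiv ℝ x p₀ v = Jx.mulVec v + Jx'.mulVec (fun j => starRingEnd ℂ (v j)))
    (f : (Fin n → ℂ) × (Fin k → ℂ) → ℝ)
    (hf : DifferentiableAt ℝ f (x p₀, p₀))
    (a : Fin n → ℂ) (c : Fin k → ℂ)
    (hfd : ∀ (u : Fin n → ℂ) (w : Fin k → ℂ),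
      fderiv ℝ f (x p₀, p₀) (u, w) =
        2 * (∑ j, a j * u j).re + 2 * (∑ j, c j * w j).re) :
    DifferentiableAt ℝ (fun p => f (x p, p)) p₀ ∧
    ∀ w : Fin k → ℂ,
      fderiv ℝ (fun p => f (x p, p)) p₀ w =
        (∑ j, starRingEnd ℂ
          ((Jx.conjTranspose.mulVec (fun i => 2 * starRingEnd ℂ (a i)) +
            Jx'.transpose.mulVec (fun i => 2 * a i) +
            fun i => 2 * starRingEnd ℂ (c i)) j) * w j).re := by
  have h := constrained_cost_gradient_general hx.hasFDerivAt hJx hf.hasFDerivAt hfd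
  exact ⟨h.differentiableAt, DFunLike.congr_fun h.fderiv⟩
end

section
/- Under the hypotheses of the generalized adjoint constraint equations with m = n (x : ℂᵏ → ℂⁿ real-differentiable at p₀ with Wirtinger decomposition (Jx, Jx'); g : ℂⁿ × ℂᵏ → ℂⁿ real-differentiable at (x p₀, p₀) with joint decomposition matrices A, B ∈ Matrix n n ℂ and C, D ∈ Matrix n k ℂ; g(x p, p) = 0 near p₀), suppose that g is holomorphic in its first argument in the sense that B = 0, and that A is invertible. Then Jx = −A⁻¹·C and Jx' = −A⁻¹·D. -/
/-!
Differentiating `g (x p, p) = 0` at `p₀` shows that the real-linear map `v ↦ g' (x' v, v)` vanishes.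
Collecting its `ℂ`-linear and conjugate-linear parts gives
`A * Jx + B * conj Jx' + C = 0` and `A * Jx' + B * conj Jx + D = 0`.
When `B = 0` the two equations decouple, and a left inverse of `A` solves each of them.
-/

open Matrix Topology ComplexConjugate

section WirtingerDecomposition

variable {ι κ μ : Type*} [Fintype κ]

/-- `(J, J')` is the Wirtinger decomposition of the real-linear map `L`: the matrices of its
`ℂ`-linear and conjugate-linear parts. The map is unbundled, so that linear and continuous
linear maps are both covered by coercion; its real-linearity follows from the equation. -/
def IsWirtingerDecomposition (L : (κ → ℂ) → ι → ℂ) (J J' : Matrix ι κ ℂ) : Prop :=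
  ∀ v, L v = J *ᵥ v + J' *ᵥ star v

/-- `(A, B, C, D)` is the joint Wirtinger decomposition of the real-linear map `M`: `A`, `B` are the
matrices of its `ℂ`-linear and conjugate-linear parts in the first argument, `C`, `D` those in the
second. -/
def IsJointWirtingerDecomposition [Fintype ι] (M : (ι → ℂ) × (κ → ℂ) → μ → ℂ)
    (A B : Matrix μ ι ℂ) (C D : Matrix μ κ ℂ) : Prop :=
  ∀ u w, M (u, w) = A *ᵥ u + B *ᵥ star u + C *ᵥ w + D *ᵥ star w

theorem isWirtingerDecomposition_zero :
    IsWirtingerDecomposition (0 : (κ → ℂ) → ι → ℂ) 0 0 :=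
  fun v => by simp

theorem IsWirtingerDecomposition.unique {L : (κ → ℂ) → ι → ℂ} {J J' K K' : Matrix ι κ ℂ}
    (hJ : IsWirtingerDecomposition L J J') (hK : IsWirtingerDecomposition L K K') :
    J = K ∧ J' = K' := by
  have value_eq (v : κ → ℂ) : J *ᵥ v + J' *ᵥ star v = K *ᵥ v + K' *ᵥ star v :=
    (hJ v).symm.trans (hK v)
  -- Evaluating at `I • v` flips the sign of the conjugate-linear part relative to the linear one.
  have value_I_smul_eq (v : κ → ℂ) : J *ᵥ v - J' *ᵥ star v = K *ᵥ v - K' *ᵥ star v := by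
    have h := value_eq (Complex.I • v)
    simp only [star_smul, mulVec_smul, Complex.star_def, Complex.conj_I, neg_smul, mulVec_neg,
      ← sub_eq_add_neg, ← smul_sub] at h
    exact smul_right_injective _ Complex.I_ne_zero h
  have linear_eq (v : κ → ℂ) : J *ᵥ v = K *ᵥ v := by
    linear_combination (norm := module) (1 / 2 : ℂ) • (value_eq v + value_I_smul_eq v)
  have conj_linear_eq (v : κ → ℂ) : J' *ᵥ v = K' *ᵥ v := by
    simpa only [linear_eq, add_right_inj, star_star] using value_eq (star v)
  exact ⟨mulVec_injective (funext linear_eq), mulVec_injective (funext conj_linear_eq)⟩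

protected theorem IsWirtingerDecomposition.star {L : (κ → ℂ) → ι → ℂ} {J J' : Matrix ι κ ℂ}
    (hL : IsWirtingerDecomposition L J J') :
    IsWirtingerDecomposition (fun v => star (L v)) (J'.map conj) (J.map conj) := fun v => by
  have star_mulVec_eq (M : Matrix ι κ ℂ) (w : κ → ℂ) :
      star (M *ᵥ w) = M.map conj *ᵥ star w :=
    funext fun i => RingHom.map_mulVec conj M w i
  simp only [hL v, star_add, star_mulVec_eq, star_star, add_comm]

theorem IsJointWirtingerDecomposition.comp_graph [Fintype ι]
    {M : (ι → ℂ) × (κ → ℂ) → μ → ℂ} {A B : Matrix μ ι ℂ} {C D : Matrix μ κ ℂ}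
    {L : (κ → ℂ) → ι → ℂ} {J J' : Matrix ι κ ℂ}
    (hM : IsJointWirtingerDecomposition M A B C D) (hL : IsWirtingerDecomposition L J J') :
    IsWirtingerDecomposition (fun v => M (L v, v))
      (A * J + B * J'.map conj + C) (A * J' + B * J.map conj + D) := fun v => by
  have star_eq : star (L v) = J'.map conj *ᵥ v + J.map conj *ᵥ star v := hL.star v
  calc
    M (L v, v) = A *ᵥ L v + B *ᵥ star (L v) + C *ᵥ v + D *ᵥ star v := hM _ _
    _ = A *ᵥ (J *ᵥ v + J' *ᵥ star v) + B *ᵥ (J'.map conj *ᵥ v + J.map conj *ᵥ star v) +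
        C *ᵥ v + D *ᵥ star v := by rw [star_eq, hL v]
    _ = (A * J + B * J'.map conj + C) *ᵥ v + (A * J' + B * J.map conj + D) *ᵥ star v := by
      simp only [mulVec_add, add_mulVec, mulVec_mulVec]
      abel

end WirtingerDecomposition

theorem fderiv_graph_apply_eq_zero_of_eventually_eq_const {𝕜 E F G : Type*}
    [NontriviallyNormedField 𝕜] [NormedAddCommGroup E] [NormedSpace 𝕜 E]
    [NormedAddCommGroup F] [NormedSpace 𝕜 F] [NormedAddCommGroup G] [NormedSpace 𝕜 G]
    {x : E → F} {x' : E →L[𝕜] F} {p₀ : E} {g : F × E → G} {g' : F × E →L[𝕜] G} {c : G}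
    (hx : HasFDerivAt x x' p₀) (hg : HasFDerivAt g g' (x p₀, p₀))
    (hconstr : ∀ᶠ p in 𝓝 p₀, g (x p, p) = c) (v : E) : g' (x' v, v) = 0 := by
  have chain_rule : HasFDerivAt (fun p => g (x p, p)) (g' ∘L x'.prod (.id 𝕜 E)) p₀ :=
    hg.comp (f := fun p => (x p, p)) p₀ (hx.prodMk (hasFDerivAt_id p₀))
  have deriv_zero : HasFDerivAt (fun p => g (x p, p)) (0 : E →L[𝕜] G) p₀ :=
    (hasFDerivAt_const c p₀).congr_of_eventuallyEq hconstr
  exact DFunLike.congr_fun (chain_rule.unique deriv_zero) v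

section AdjointEquations

variable {ι κ μ : Type*} [Fintype ι] [Fintype κ]
  {x : (κ → ℂ) → ι → ℂ} {x' : (κ → ℂ) →L[ℝ] ι → ℂ} {p₀ : κ → ℂ} {Jx Jx' : Matrix ι κ ℂ}
  {g : (ι → ℂ) × (κ → ℂ) → μ → ℂ} {g' : (ι → ℂ) × (κ → ℂ) →L[ℝ] μ → ℂ}
  {A B : Matrix μ ι ℂ} {C D : Matrix μ κ ℂ} {c : μ → ℂ}

theorem adjoint_constraint_equations [Finite μ]
    (hx : HasFDerivAt x x' p₀) (hJx : IsWirtingerDecomposition x' Jx Jx')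
    (hg : HasFDerivAt g g' (x p₀, p₀)) (hABCD : IsJointWirtingerDecomposition g' A B C D)
    (hconstr : ∀ᶠ p in 𝓝 p₀, g (x p, p) = c) :
    A * Jx + B * Jx'.map conj + C = 0 ∧ A * Jx' + B * Jx.map conj + D = 0 := by
  cases nonempty_fintype μ
  have vanishing : (fun v => g' (x' v, v)) = 0 :=
    funext (fderiv_graph_apply_eq_zero_of_eventually_eq_const hx hg hconstr)
  exact (vanishing ▸ hABCD.comp_graph hJx).unique isWirtingerDecomposition_zero

theorem adjoint_holomorphic_in_x_general [Fintype μ] [DecidableEq ι] {A' : Matrix ι μ ℂ}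
    (hx : HasFDerivAt x x' p₀) (hJx : IsWirtingerDecomposition x' Jx Jx')
    (hg : HasFDerivAt g g' (x p₀, p₀)) (hACD : IsJointWirtingerDecomposition g' A 0 C D)
    (hconstr : ∀ᶠ p in 𝓝 p₀, g (x p, p) = c) (hA : A' * A = 1) :
    Jx = -(A' * C) ∧ Jx' = -(A' * D) := by
  have solve {X : Matrix ι κ ℂ} {E : Matrix μ κ ℂ} (h : A * X + E = 0) : X = -(A' * E) := by
    rw [← Matrix.mul_neg, ← eq_neg_of_add_eq_zero_left h, ← Matrix.mul_assoc, hA, Matrix.one_mul]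
  obtain ⟨linear_eq, conj_linear_eq⟩ := adjoint_constraint_equations hx hJx hg hACD hconstr
  rw [Matrix.zero_mul, add_zero] at linear_eq conj_linear_eq
  exact ⟨solve linear_eq, solve conj_linear_eq⟩

end AdjointEquations

/-- Adjoint equations when `g` is holomorphic in its first argument (`B = 0`) and `A`
is invertible: then `Jx = -A⁻¹·C` and `Jx' = -A⁻¹·D`. -/
theorem adjoint_holomorphic_in_x (n k : ℕ)
    (x : (Fin k → ℂ) → (Fin n → ℂ)) (p₀ : Fin k → ℂ)
    (hx : DifferentiableAt ℝ x p₀)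
    (Jx Jx' : Matrix (Fin n) (Fin k) ℂ)
    (hJx : ∀ v : Fin k → ℂ,
      fderiv ℝ x p₀ v = Jx.mulVec v + Jx'.mulVec (fun j => starRingEnd ℂ (v j)))
    (g : (Fin n → ℂ) × (Fin k → ℂ) → Fin n → ℂ)
    (hg : DifferentiableAt ℝ g (x p₀, p₀))
    (A B : Matrix (Fin n) (Fin n) ℂ) (C D : Matrix (Fin n) (Fin k) ℂ)
    (hABCD : ∀ (u : Fin n → ℂ) (w : Fin k → ℂ),
      fderiv ℝ g (x p₀, p₀) (u, w) =
        A.mulVec u + B.mulVec (fun j => starRingEnd ℂ (u j)) +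
        C.mulVec w + D.mulVec (fun j => starRingEnd ℂ (w j)))
    (hconstr : ∀ᶠ p in nhds p₀, g (x p, p) = 0)
    (hB : B = 0) (hA : IsUnit A.det) :
    Jx = -(A⁻¹ * C) ∧ Jx' = -(A⁻¹ * D) := by
  subst hB
  exact adjoint_holomorphic_in_x_general hx.hasFDerivAt hJx hg.hasFDerivAt hABCD hconstr
    (Matrix.nonsing_inv_mul A hA)
end

section
/- Adjoint method for holomorphic linear constraints with real parameters: let A : ℝᵏ → Matrix (Fin n) (Fin n) ℂ be differentiable at p₀ with A(p) invertible for all p in a neighborhood of p₀, let b ∈ ℂⁿ, and define x(p) := A(p)⁻¹·b. Let f : ℂⁿ → ℝ be real-differentiable at x(p₀) and let w ∈ ℂⁿ be its gradient there, i.e., (fderiv ℝ f (x p₀))(u) = Re⟪w, u⟫ for all u ∈ ℂⁿ. Let λ ∈ ℂⁿ be the solution of the adjoint equation A(p₀)ᴴ·λ = w. Then p ↦ f(x p) is differentiable at p₀ and for every v ∈ ℝᵏ, (fderiv ℝ (fun p => f (x p)) p₀)(v) = −Re⟪λ, (fderiv ℝ A p₀ v)·(x p₀)⟫. -/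
attribute [local instance] Matrix.normedAddCommGroup Matrix.normedSpace

/-!
Since `d(A⁻¹) = -A⁻¹ (dA) A⁻¹`, the solution `x = A⁻¹ b` satisfies `dx = -A⁻¹ (dA) x`, and the chain
rule gives `df = Re ⟪w, dx⟫ = -Re ⟪w, A⁻¹ (dA) x⟫`. Substituting `w = Aᴴ λ` and moving `Aᴴ` to the
other side of the inner product cancels `A⁻¹`.
-/

open scoped Matrix

section MatrixInverse

variable {𝕜 R n : Type*} [NontriviallyNormedField 𝕜] [NormedCommRing R] [NormedAlgebra 𝕜 R]
  [CompleteSpace R] [Fintype n] [DecidableEq n] {A : Matrix n n R}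

section OperatorNorm

open scoped Matrix.Norms.Operator

-- The elementwise norm is not submultiplicative, so ring inversion is differentiated for the `L∞`
-- operator norm. The two norms induce definitionally equal topologies, and `HasFDerivAt`
-- depends on the topologies only, so the result also holds for the elementwise norm.
theorem hasFDerivAt_matrix_inv (hA : IsUnit A.det) :
    HasFDerivAt (fun M : Matrix n n R ↦ M⁻¹)
      (-ContinuousLinearMap.mulLeftRight 𝕜 (Matrix n n R) A⁻¹ A⁻¹) A := by
  have : @CompleteSpace (Matrix n n R) PseudoMetricSpace.toUniformSpace :=
    inferInstanceAs (CompleteSpace (n → n → R))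
  lift A to (Matrix n n R)ˣ using (Matrix.isUnit_iff_isUnit_det A).mpr hA
  simpa only [Matrix.nonsing_inv_eq_ringInverse, Ring.inverse_unit] using
    hasFDerivAt_ringInverse (𝕜 := 𝕜) A

end OperatorNorm

theorem differentiableAt_matrix_inv (hA : IsUnit A.det) :
    DifferentiableAt 𝕜 (fun M : Matrix n n R ↦ M⁻¹) A :=
  (hasFDerivAt_matrix_inv hA).differentiableAt

theorem fderiv_matrix_inv_apply (hA : IsUnit A.det) (X : Matrix n n R) :
    fderiv 𝕜 (fun M : Matrix n n R ↦ M⁻¹) A X = -(A⁻¹ * X * A⁻¹) :=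
  DFunLike.congr_fun (hasFDerivAt_matrix_inv hA).fderiv X

end MatrixInverse

section LinearSystem

/-- The map `M ↦ M *ᵥ b` as a continuous linear map over the scalars `𝕜`, with which the
derivative of a matrix-valued map is transported to its product with a fixed vector. -/
def mulVecRightCLM {m n R : Type*} (𝕜 : Type*) [CommSemiring 𝕜] [Semiring R] [Algebra 𝕜 R]
    [TopologicalSpace R] [IsTopologicalSemiring R] [Fintype n] (b : n → R) :
    Matrix m n R →L[𝕜] m → R where
  toFun M := M *ᵥ b
  map_add' M N := Matrix.add_mulVec M N b
  map_smul' c M := Matrix.smul_mulVec c M b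

variable {𝕜 E R n : Type*} [NontriviallyNormedField 𝕜] [NormedAddCommGroup E] [NormedSpace 𝕜 E]
  [NormedCommRing R] [NormedAlgebra 𝕜 R] [CompleteSpace R] [Fintype n] [DecidableEq n]
  {A : E → Matrix n n R} {p₀ : E}

theorem differentiableAt_inv_mulVec (hA : DifferentiableAt 𝕜 A p₀) (hdet : IsUnit (A p₀).det)
    (b : n → R) : DifferentiableAt 𝕜 (fun p ↦ (A p)⁻¹ *ᵥ b) p₀ :=
  DifferentiableAt.comp (g := mulVecRightCLM 𝕜 b) p₀ (mulVecRightCLM 𝕜 b).differentiableAt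
    ((differentiableAt_matrix_inv hdet).comp p₀ hA)

theorem fderiv_inv_mulVec_apply (hA : DifferentiableAt 𝕜 A p₀) (hdet : IsUnit (A p₀).det)
    (b : n → R) (v : E) :
    fderiv 𝕜 (fun p ↦ (A p)⁻¹ *ᵥ b) p₀ v =
      -((A p₀)⁻¹ *ᵥ (fderiv 𝕜 A p₀ v *ᵥ ((A p₀)⁻¹ *ᵥ b))) := by
  have hinv := differentiableAt_matrix_inv (𝕜 := 𝕜) hdet
  have hmul := (mulVecRightCLM 𝕜 b).hasFDerivAt.comp p₀ (hinv.comp p₀ hA).hasFDerivAt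
  calc fderiv 𝕜 (fun p ↦ (A p)⁻¹ *ᵥ b) p₀ v
      = fderiv 𝕜 (fun p ↦ (A p)⁻¹) p₀ v *ᵥ b :=
        DFunLike.congr_fun hmul.fderiv v
    _ = fderiv 𝕜 (fun M : Matrix n n R ↦ M⁻¹) (A p₀) (fderiv 𝕜 A p₀ v) *ᵥ b :=
        congrArg (· *ᵥ b) (DFunLike.congr_fun (fderiv_comp p₀ hinv hA) v)
    _ = -((A p₀)⁻¹ *ᵥ (fderiv 𝕜 A p₀ v *ᵥ ((A p₀)⁻¹ *ᵥ b))) := by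
        rw [fderiv_matrix_inv_apply hdet, Matrix.neg_mulVec, Matrix.mulVec_mulVec,
          Matrix.mulVec_mulVec, Matrix.mul_assoc]

end LinearSystem

theorem star_conjTranspose_mulVec_dotProduct_inv_mulVec {n R : Type*} [CommRing R] [StarRing R]
    [Fintype n] [DecidableEq n] {A : Matrix n n R} (hA : IsUnit A.det) (u v : n → R) :
    star (Aᴴ *ᵥ u) ⬝ᵥ (A⁻¹ *ᵥ v) = star u ⬝ᵥ v := by
  rw [Matrix.star_mulVec, Matrix.conjTranspose_conjTranspose, ← Matrix.dotProduct_mulVec,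
    Matrix.mulVec_mulVec, Matrix.mul_nonsing_inv _ hA, Matrix.one_mulVec]

theorem adjoint_method_linear_constraint_general {E 𝕜 n : Type*} [NormedAddCommGroup E]
    [NormedSpace ℝ E] [RCLike 𝕜] [Fintype n] [DecidableEq n] {A : E → Matrix n n 𝕜} {p₀ : E}
    (hA : DifferentiableAt ℝ A p₀) (hdet : IsUnit (A p₀).det) (b : n → 𝕜) {f : (n → 𝕜) → ℝ}
    (hf : DifferentiableAt ℝ f ((A p₀)⁻¹ *ᵥ b)) {w : n → 𝕜}
    (hgrad : ∀ u, fderiv ℝ f ((A p₀)⁻¹ *ᵥ b) u = RCLike.re (star w ⬝ᵥ u))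
    {lam : n → 𝕜} (hlam : (A p₀)ᴴ *ᵥ lam = w) :
    DifferentiableAt ℝ (fun p ↦ f ((A p)⁻¹ *ᵥ b)) p₀ ∧
      ∀ v, fderiv ℝ (fun p ↦ f ((A p)⁻¹ *ᵥ b)) p₀ v =
        -RCLike.re (star lam ⬝ᵥ (fderiv ℝ A p₀ v *ᵥ ((A p₀)⁻¹ *ᵥ b))) := by
  have hx := differentiableAt_inv_mulVec hA hdet b
  refine ⟨hf.comp p₀ hx, fun v ↦ ?_⟩
  set x₀ := (A p₀)⁻¹ *ᵥ b
  calc fderiv ℝ (fun p ↦ f ((A p)⁻¹ *ᵥ b)) p₀ v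
      = fderiv ℝ f x₀ (fderiv ℝ (fun p ↦ (A p)⁻¹ *ᵥ b) p₀ v) :=
        DFunLike.congr_fun (fderiv_comp p₀ hf hx) v
    _ = -RCLike.re (star w ⬝ᵥ ((A p₀)⁻¹ *ᵥ (fderiv ℝ A p₀ v *ᵥ x₀))) := by
        rw [fderiv_inv_mulVec_apply hA hdet, hgrad, dotProduct_neg, map_neg]
    _ = -RCLike.re (star lam ⬝ᵥ (fderiv ℝ A p₀ v *ᵥ x₀)) := by
        rw [← hlam, star_conjTranspose_mulVec_dotProduct_inv_mulVec hdet]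

/-- Adjoint method for holomorphic linear constraints `A(p)·x = b` with real parameters:
with `x p = A(p)⁻¹·b`, gradient `w` of `f` at `x p₀`, and adjoint variable `λ` solving
`A(p₀)ᴴ·λ = w`, the derivative of `p ↦ f (x p)` in direction `v` is
`-Re ⟪λ, (∂A/∂p [v])·(x p₀)⟫`. -/
theorem adjoint_method_linear_constraint (n k : ℕ)
    (A : (Fin k → ℝ) → Matrix (Fin n) (Fin n) ℂ) (p₀ : Fin k → ℝ)
    (hA : DifferentiableAt ℝ A p₀)
    (hAinv : ∀ᶠ p in nhds p₀, IsUnit (A p).det)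
    (b : Fin n → ℂ)
    (x : (Fin k → ℝ) → (Fin n → ℂ))
    (hxdef : ∀ p, x p = (A p)⁻¹.mulVec b)
    (f : (Fin n → ℂ) → ℝ)
    (hf : DifferentiableAt ℝ f (x p₀))
    (w : Fin n → ℂ)
    (hgrad : ∀ u : Fin n → ℂ,
      (fderiv ℝ f (x p₀)) u = (∑ j, starRingEnd ℂ (w j) * u j).re)
    (lam : Fin n → ℂ)
    (hlam : (A p₀).conjTranspose.mulVec lam = w) :
    DifferentiableAt ℝ (fun p => f (x p)) p₀ ∧
    ∀ v : Fin k → ℝ,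
      fderiv ℝ (fun p => f (x p)) p₀ v =
        -(∑ j, starRingEnd ℂ (lam j) * (fderiv ℝ A p₀ v).mulVec (x p₀) j).re := by
  obtain rfl := funext hxdef
  exact adjoint_method_linear_constraint_general hA hAinv.self_of_nhds b hf hgrad hlam
end

section
/- Conjugate structure of the Lagrangian adjoint variables: let A, B ∈ Matrix (Fin n) (Fin n) ℂ and w ∈ ℂⁿ. Suppose the 2n×2n block matrix with blocks [[Aᴴ, Bᵀ], [Bᴴ, Aᵀ]] is invertible, and let (λ₁, λ₂) ∈ ℂⁿ × ℂⁿ be the unique solution of the system Aᴴ·λ₁ + Bᵀ·λ₂ = w and Bᴴ·λ₁ + Aᵀ·λ₂ = conj(w). Then λ₂ = conj(λ₁). -/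
/-!
The map `(x, y) ↦ (star y, star x)` commutes with the block matrix
`[[P, Q], [star Q, star P]]`, where `star` acts entrywise, and fixes precisely the vectors
`(x, star x)`. Here `P = Aᴴ` and `Q = Bᵀ`: the right-hand side `(w, star w)` is fixed, hence so is
its preimage under an injective such matrix.
-/

open Matrix

section StarSwap

variable {m n R : Type*}

/-- The antilinear involution `(x, y) ↦ (star y, star x)` on pairs of vectors, used to express
conjugate symmetry of a solution. Pairs are encoded as vectors indexed by `n ⊕ n`, the form on
which block matrices act. -/
def starSwap [Star R] (v : n ⊕ n → R) : n ⊕ n → R := star v ∘ Sum.swap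

theorem starSwap_sumElim [Star R] (x y : n → R) :
    starSwap (Sum.elim x y) = Sum.elim (star y) (star x) := by
  ext (i | i) <;> rfl

theorem starSwap_sumElim_eq_self_iff [InvolutiveStar R] {x y : n → R} :
    starSwap (Sum.elim x y) = Sum.elim x y ↔ y = star x := by
  rw [starSwap_sumElim, Sum.elim_eq_iff, star_eq_iff_star_eq, eq_comm (a := star x), and_self]

variable [Fintype m] [NonUnitalCommSemiring R] [StarRing R]

theorem star_mulVec_eq_map_star_mulVec_star (M : Matrix n m R) (v : m → R) :
    star (M *ᵥ v) = M.map star *ᵥ star v := by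
  rw [star_mulVec, ← mulVec_transpose, conjTranspose, transpose_map, transpose_transpose]

theorem starSwap_fromBlocks_mulVec (P Q : Matrix n m R) (v : m ⊕ m → R) :
    starSwap (fromBlocks P Q (Q.map star) (P.map star) *ᵥ v) =
      fromBlocks P Q (Q.map star) (P.map star) *ᵥ starSwap v := by
  obtain ⟨x, y, rfl⟩ : ∃ x y, v = Sum.elim x y := ⟨_, _, (Sum.elim_comp_inl_inr v).symm⟩
  simp only [starSwap_sumElim, fromBlocks_mulVec, Sum.elim_comp_inl, Sum.elim_comp_inr, star_add,
    star_mulVec_eq_map_star_mulVec_star, Matrix.map_map, star_involutive.comp_self,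
    Matrix.map_id, add_comm]

theorem starSwap_eq_self_of_fromBlocks_mulVec {P Q : Matrix n m R}
    (hinj : (fromBlocks P Q (Q.map star) (P.map star)).mulVec.Injective) {v : m ⊕ m → R}
    (hv : starSwap (fromBlocks P Q (Q.map star) (P.map star) *ᵥ v) =
      fromBlocks P Q (Q.map star) (P.map star) *ᵥ v) :
    starSwap v = v :=
  hinj ((starSwap_fromBlocks_mulVec P Q v).symm.trans hv)

theorem lagrangian_adjoint_conjugate_structure_general (A B : Matrix m n R) (w : n → R)
    (hinj : (fromBlocks Aᴴ Bᵀ Bᴴ Aᵀ).mulVec.Injective) (lam₁ lam₂ : m → R)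
    (h₁ : Aᴴ *ᵥ lam₁ + Bᵀ *ᵥ lam₂ = w) (h₂ : Bᴴ *ᵥ lam₁ + Aᵀ *ᵥ lam₂ = star w) :
    lam₂ = star lam₁ := by
  have hblocks : fromBlocks Aᴴ Bᵀ Bᴴ Aᵀ = fromBlocks Aᴴ Bᵀ (Bᵀ.map star) (Aᴴ.map star) := by
    rw [conjTranspose, conjTranspose, Matrix.map_map, star_involutive.comp_self, Matrix.map_id]
  have hsol : fromBlocks Aᴴ Bᵀ Bᴴ Aᵀ *ᵥ Sum.elim lam₁ lam₂ = Sum.elim w (star w) := by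
    rw [fromBlocks_mulVec, Sum.elim_comp_inl, Sum.elim_comp_inr, h₁, h₂]
  rw [hblocks] at hinj hsol
  have hfixed : starSwap (Sum.elim lam₁ lam₂) = Sum.elim lam₁ lam₂ := by
    apply starSwap_eq_self_of_fromBlocks_mulVec hinj
    rw [hsol, starSwap_sumElim_eq_self_iff]
  exact starSwap_sumElim_eq_self_iff.mp hfixed

end StarSwap

/-- Conjugate structure of the Lagrangian adjoint variables: if the block matrix
`[[Aᴴ, Bᵀ], [Bᴴ, Aᵀ]]` is invertible and `(λ₁, λ₂)` solves
`Aᴴ·λ₁ + Bᵀ·λ₂ = w`, `Bᴴ·λ₁ + Aᵀ·λ₂ = conj w`, then `λ₂ = conj λ₁`. -/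
theorem lagrangian_adjoint_conjugate_structure (n : ℕ)
    (A B : Matrix (Fin n) (Fin n) ℂ) (w : Fin n → ℂ)
    (hM : IsUnit (Matrix.fromBlocks
      A.conjTranspose B.transpose B.conjTranspose A.transpose).det)
    (lam₁ lam₂ : Fin n → ℂ)
    (h₁ : A.conjTranspose.mulVec lam₁ + B.transpose.mulVec lam₂ = w)
    (h₂ : B.conjTranspose.mulVec lam₁ + A.transpose.mulVec lam₂ =
      fun j => starRingEnd ℂ (w j)) :
    lam₂ = fun j => starRingEnd ℂ (lam₁ j) := by
  have hinj := mulVec_injective_of_isUnit ((isUnit_iff_isUnit_det _).mpr hM)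
  exact lagrangian_adjoint_conjugate_structure_general A B w hinj lam₁ lam₂ h₁ h₂
end

section
/- Standard (real) adjoint method: let x : ℝᵏ → ℝⁿ be differentiable at p₀, let g : ℝⁿ × ℝᵏ → ℝⁿ be differentiable at (x p₀, p₀) with (fderiv ℝ g (x p₀, p₀))(u, w) = G₁·u + G₂·w for matrices G₁ ∈ Matrix n n ℝ and G₂ ∈ Matrix n k ℝ, and suppose g(x p, p) = 0 for all p in a neighborhood of p₀ and that G₁ is invertible. Let f : ℝⁿ → ℝ be differentiable at x p₀ with gradient ∇f ∈ ℝⁿ (i.e., (fderiv ℝ f (x p₀))(u) = ⟨∇f, u⟩ for all u), and let λ ∈ ℝⁿ solve the adjoint equation G₁ᵀ·λ = −∇f. Then for every v ∈ ℝᵏ, (fderiv ℝ (fun p => f (x p)) p₀)(v) = ⟨G₂ᵀ·λ, v⟩. -/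
/-!
Differentiating the constraint `g (x p, p) = 0` along the solution branch gives
`g' (x' v, 0) = -g' (0, v)`. The adjoint variable `Λ` is chosen so that `Λ ∘ g' (·, 0) = -f'`;
applying it to this identity turns `f' (x' v)` into `Λ (g' (0, v))`, in which the sensitivity
`x'` of the solution no longer appears. For matrices, `Λ` is `y ↦ ⟨λ, y⟩`.
-/

section NormedSpace

variable {𝕜 P X Y Z : Type*} [NontriviallyNormedField 𝕜]
  [NormedAddCommGroup P] [NormedSpace 𝕜 P] [NormedAddCommGroup X] [NormedSpace 𝕜 X]
  [NormedAddCommGroup Y] [NormedSpace 𝕜 Y] [NormedAddCommGroup Z] [NormedSpace 𝕜 Z]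
  {x : P → X} {x' : P →L[𝕜] X} {p₀ : P} {g : X × P → Y} {g' : X × P →L[𝕜] Y}

theorem fderiv_along_graph_eq_zero_of_eventually_eq_const {c : Y}
    (hx : HasFDerivAt x x' p₀) (hg : HasFDerivAt g g' (x p₀, p₀))
    (hconst : ∀ᶠ p in nhds p₀, g (x p, p) = c) (v : P) :
    g' (x' v, v) = 0 := by
  have hcomp : HasFDerivAt (fun p ↦ g (x p, p)) (g' ∘L x'.prod (.id 𝕜 P)) p₀ :=
    hg.comp (f := fun p ↦ (x p, p)) p₀ (hx.prodMk (hasFDerivAt_id p₀))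
  have hzero : HasFDerivAt (fun p ↦ g (x p, p)) (0 : P →L[𝕜] Y) p₀ :=
    (hasFDerivAt_const c p₀).congr_of_eventuallyEq hconst
  exact DFunLike.congr_fun (hcomp.unique hzero) v

theorem standard_real_adjoint_method_general {f : X → Z} {f' : X →L[𝕜] Z} {c : Y}
    (hx : HasFDerivAt x x' p₀) (hg : HasFDerivAt g g' (x p₀, p₀))
    (hconst : ∀ᶠ p in nhds p₀, g (x p, p) = c) (hf : HasFDerivAt f f' (x p₀))
    (Λ : Y →ₗ[𝕜] Z) (hΛ : ∀ u, Λ (g' (u, 0)) = -f' u) (v : P) :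
    fderiv 𝕜 (fun p ↦ f (x p)) p₀ v = Λ (g' (0, v)) := by
  have hlin : g' (x' v, 0) + g' (0, v) = 0 := by
    simpa [← map_add] using
      fderiv_along_graph_eq_zero_of_eventually_eq_const hx hg hconst v
  calc
    fderiv 𝕜 (fun p ↦ f (x p)) p₀ v = f' (x' v) := DFunLike.congr_fun (hf.comp p₀ hx).fderiv v
    _ = -Λ (g' (x' v, 0)) := by rw [hΛ, neg_neg]
    _ = Λ (g' (0, v)) := by rw [← map_neg, neg_eq_of_add_eq_zero_right hlin]

end NormedSpace

theorem dotProduct_mulVec_eq_sum_transpose_mulVec_mul {m n R : Type*} [Fintype m] [Fintype n]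
    [NonUnitalCommSemiring R] (A : Matrix m n R) (y : m → R) (u : n → R) :
    y ⬝ᵥ A.mulVec u = ∑ j, A.transpose.mulVec y j * u j := by
  rw [Matrix.dotProduct_mulVec, ← Matrix.mulVec_transpose, dotProduct]

/-- The standard (real) adjoint method: with constraint `g (x p, p) = 0` near `p₀`,
Jacobians `G₁` (invertible) and `G₂` of `g`, gradient `∇f` of the cost `f` at `x p₀`,
and adjoint variable `λ` solving `G₁ᵀ·λ = -∇f`, the derivative of `p ↦ f (x p)` at `p₀`
in direction `v` equals `⟨G₂ᵀ·λ, v⟩`. -/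
theorem standard_real_adjoint_method (n k : ℕ)
    (x : (Fin k → ℝ) → (Fin n → ℝ)) (p₀ : Fin k → ℝ)
    (hx : DifferentiableAt ℝ x p₀)
    (g : (Fin n → ℝ) × (Fin k → ℝ) → Fin n → ℝ)
    (hg : DifferentiableAt ℝ g (x p₀, p₀))
    (G₁ : Matrix (Fin n) (Fin n) ℝ) (G₂ : Matrix (Fin n) (Fin k) ℝ)
    (hGd : ∀ (u : Fin n → ℝ) (w : Fin k → ℝ),
      fderiv ℝ g (x p₀, p₀) (u, w) = G₁.mulVec u + G₂.mulVec w)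
    (hconstr : ∀ᶠ p in nhds p₀, g (x p, p) = 0)
    (hG₁ : IsUnit G₁.det)
    (f : (Fin n → ℝ) → ℝ) (hf : DifferentiableAt ℝ f (x p₀))
    (gradf : Fin n → ℝ)
    (hgrad : ∀ u : Fin n → ℝ, fderiv ℝ f (x p₀) u = ∑ j, gradf j * u j)
    (lam : Fin n → ℝ) (hlam : G₁.transpose.mulVec lam = -gradf) :
    ∀ v : Fin k → ℝ,
      fderiv ℝ (fun p => f (x p)) p₀ v = ∑ j, G₂.transpose.mulVec lam j * v j := by
  have hadj (u : Fin n → ℝ) : lam ⬝ᵥ fderiv ℝ g (x p₀, p₀) (u, 0) = -fderiv ℝ f (x p₀) u := by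
    simp [hGd, hgrad, hlam, dotProduct_mulVec_eq_sum_transpose_mulVec_mul]
  simpa [hGd, dotProduct_mulVec_eq_sum_transpose_mulVec_mul] using
    standard_real_adjoint_method_general hx.hasFDerivAt hg.hasFDerivAt hconstr hf.hasFDerivAt
      (dotProductBilin ℝ ℝ lam) hadj
end
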